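/- Fix finite nonempty sets A₀, A₁ ⊂ ℕ with n' := max A₀ ≥ 1, m' := max A₁ ≥ 1, gcd of the nonzero elements of A₀ ∪ A₁ equal to 1, and such that 0 ∈ A₀ or 0 ∈ A₁ (at least one of P₀, P₁ has a constant term). Then for generic coefficients, the Newton polygon N(φ) of every irreducible φ ∈ ℂ[x,y] with φ(P₀(t), P₁(t)) = 0 in ℂ[t] equals the triangle with vertices (0,0), (m', 0), (0, n'). -/

import Mathlib

/-!
For a curve `x = P₀(t)`, `y = P₁(t)` with `n = deg P₀` and `m = deg P₁`, the resultant `R` of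
`P₀(t) - x` and `P₁(t) - y` with respect to `t` vanishes on the curve. Giving `x` weight `n` and
`y` weight `m`, it has weighted degree at most `n m`, so `N(R)` lies in the triangle with vertices
`(0,0)`, `(m,0)`, `(0,n)`, and its constant term is the resultant of `P₀` and `P₁`. An irreducible
`φ` vanishing on the curve divides `R`. If moreover `ℂ(P₀, P₁) = ℂ(t)`, then `deg_x φ ≥ m` and
`deg_y φ ≥ n`, because `[ℂ(t) : ℂ(P₁)] = m` and `[ℂ(t) : ℂ(P₀)] = n`; hence `φ` is `R` up to a
constant, and its polygon is the whole triangle as soon as `P₀` and `P₁` are coprime.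

Both remaining conditions are generic coprimality statements: `ℂ(P₀, P₁) = ℂ(t)` follows once
`P₀ - P₀(1)` and `P₁ - P₁(1)` have no common root besides a simple one at `1`. Generic linear
combinations of two finite families of polynomials are coprime when the two families have no
common root, and for the families `1 + t + ⋯ + t^(s-1)`, `s ∈ A₀`, and `t^s - 1`, `s ∈ A₁`, this is
the hypothesis on the gcd.
-/

open Polynomial

/-- The univariate polynomial with support `S` and coefficient vector `c`. -/
noncomputable def polyOfCoeffs (S : Finset ℕ) (c : {s // s ∈ S} → ℂ) : Polynomial ℂ :=
  ∑ s ∈ S.attach, Polynomial.C (c s) * Polynomial.X ^ (s : ℕ)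

/-- The Newton polygon of a bivariate polynomial: the convex hull in `ℝ²` of its support. -/
noncomputable def newtonPolygon (φ : MvPolynomial (Fin 2) ℂ) : Set (ℝ × ℝ) :=
  convexHull ℝ ((fun d : Fin 2 →₀ ℕ => ((d 0 : ℝ), (d 1 : ℝ))) '' ↑φ.support)

/-- `φ(P₀(t), P₁(t)) = 0` in `ℂ[t]`, where `P₀, P₁` have supports `A 0, A 1`
and coefficient vector `c`. -/
def vanishesPoly (A : Fin 2 → Finset ℕ)
    (c : (Σ i : Fin 2, {s // s ∈ A i}) → ℂ) (φ : MvPolynomial (Fin 2) ℂ) : Prop :=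
  MvPolynomial.aeval
    ![polyOfCoeffs (A 0) (fun s => c ⟨0, s⟩),
      polyOfCoeffs (A 1) (fun s => c ⟨1, s⟩)] φ = 0

section WeightedDegree

variable {σ : Type*}

section CommSemiring

variable {R : Type*} [CommSemiring R]

lemma weightedTotalDegree_prod_le {ι : Type*} (w : σ → ℕ) (s : Finset ι)
    (p : ι → MvPolynomial σ R) :
    (∏ i ∈ s, p i).weightedTotalDegree w ≤ ∑ i ∈ s, (p i).weightedTotalDegree w :=
  AddMonoidAlgebra.supDegree_prod_le (D := Finsupp.weight w) (map_zero _) (map_add _)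

lemma weightedTotalDegree_sum_le {ι : Type*} (w : σ → ℕ) (s : Finset ι)
    (p : ι → MvPolynomial σ R) :
    (∑ i ∈ s, p i).weightedTotalDegree w ≤ s.sup fun i ↦ (p i).weightedTotalDegree w :=
  AddMonoidAlgebra.supDegree_sum_le (D := Finsupp.weight w)

lemma weightedTotalDegree_le_of_isWeightedHomogeneous {w : σ → ℕ} {p : MvPolynomial σ R} {n : ℕ}
    (hp : p.IsWeightedHomogeneous w n) : p.weightedTotalDegree w ≤ n :=
  Finset.sup_le fun _ hd ↦ (hp (MvPolynomial.mem_support_iff.1 hd)).le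

end CommSemiring

variable {R : Type*} [CommRing R]

lemma weightedTotalDegree_sub_le (w : σ → ℕ) (p q : MvPolynomial σ R) :
    (p - q).weightedTotalDegree w ≤ max (p.weightedTotalDegree w) (q.weightedTotalDegree w) :=
  AddMonoidAlgebra.supDegree_sub_le (D := Finsupp.weight w)

lemma weightedTotalDegree_unit_smul (w : σ → ℕ) (u : ℤˣ) (p : MvPolynomial σ R) :
    (u • p).weightedTotalDegree w = p.weightedTotalDegree w := by
  rcases Int.units_eq_one_or u with rfl | rfl
  · rw [one_smul]
  · rw [Units.neg_smul, one_smul]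
    exact AddMonoidAlgebra.supDegree_neg (D := Finsupp.weight w)

lemma weightedTotalDegree_det_le {ι : Type*} [Fintype ι] [DecidableEq ι] (w : σ → ℕ)
    (M : Matrix ι ι (MvPolynomial σ R)) (r c : ι → ℕ)
    (h : ∀ i j, M i j ≠ 0 → (M i j).weightedTotalDegree w + r i ≤ c j) :
    M.det.weightedTotalDegree w ≤ ∑ j, c j - ∑ i, r i := by
  rw [Matrix.det_apply]
  refine (weightedTotalDegree_sum_le w _ _).trans (Finset.sup_le fun τ _ ↦ ?_)
  rw [weightedTotalDegree_unit_smul]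
  by_cases hM : ∀ j, M (τ j) j ≠ 0
  · refine (weightedTotalDegree_prod_le w _ _).trans (Nat.le_sub_of_add_le ?_)
    rw [← Equiv.sum_comp τ r, ← Finset.sum_add_distrib]
    exact Finset.sum_le_sum fun j _ ↦ h _ _ (hM j)
  · push Not at hM
    obtain ⟨j, hj⟩ := hM
    have prod_eq_zero : ∏ j, M (τ j) j = 0 := Finset.prod_eq_zero (Finset.mem_univ j) hj
    simp only [prod_eq_zero, MvPolynomial.weightedTotalDegree_zero, bot_eq_zero, zero_le]

lemma weightedTotalDegree_resultant_le (w : σ → ℕ) {f g : (MvPolynomial σ R)[X]} {m n : ℕ}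
    (hf : ∀ k ≤ m, (f.coeff k).weightedTotalDegree w + k ≤ m)
    (hg : ∀ k ≤ n, (g.coeff k).weightedTotalDegree w + k ≤ n) :
    (resultant f g m n).weightedTotalDegree w ≤ m * n := by
  -- Row `i` gets weight `i`; the columns of the Sylvester matrix are shifts of `g`, then of `f`.
  let colWeight : Fin (m + n) → ℕ := Fin.addCases (fun j ↦ n + j) (fun j ↦ m + j)
  have sum_colWeight : ∑ j, colWeight j - ∑ i : Fin (m + n), (i : ℕ) = m * n := by
    simp only [colWeight, Fin.sum_univ_add, Fin.addCases_left, Fin.addCases_right,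
      Fin.val_castAdd, Fin.val_natAdd, Finset.sum_add_distrib, Finset.sum_const, Finset.card_univ,
      Fintype.card_fin, smul_eq_mul, mul_comm n m]
    omega
  rw [resultant, ← sum_colWeight]
  refine weightedTotalDegree_det_le w _ (fun i : Fin (m + n) ↦ (i : ℕ)) colWeight fun i j ↦ ?_
  induction j using Fin.addCases with
  | left j =>
    simp only [sylvester, Matrix.of_apply, Fin.addCases_left, colWeight, Set.mem_Icc]
    split_ifs with h
    · have := hg (i - j) (by omega)
      omega
    · exact fun h0 ↦ absurd rfl h0
  | right j =>
    simp only [sylvester, Matrix.of_apply, Fin.addCases_right, colWeight, Set.mem_Icc]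
    split_ifs with h
    · have := hf (i - j) (by omega)
      omega
    · exact fun h0 ↦ absurd rfl h0

end WeightedDegree

section ImplicitResultant

variable {R : Type*} [CommRing R]

/-- The resultant with respect to `t` of `P 0 (t) - x` and `P 1 (t) - y`: an implicit equation of
the plane curve parameterized by `x = P 0 (t)`, `y = P 1 (t)`. -/
noncomputable def implicitResultant (P : Fin 2 → R[X]) : MvPolynomial (Fin 2) R :=
  resultant ((P 0).map MvPolynomial.C - C (MvPolynomial.X 0))
    ((P 1).map MvPolynomial.C - C (MvPolynomial.X 1)) (P 0).natDegree (P 1).natDegree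

lemma aeval_implicitResultant (P : Fin 2 → R[X]) (h0 : (P 0).natDegree ≠ 0) :
    MvPolynomial.aeval P (implicitResultant P) = 0 := by
  obtain ⟨p, q, -, -, bezout⟩ := exists_mul_add_mul_eq_C_resultant
    ((P 0).map MvPolynomial.C - C (MvPolynomial.X (R := R) (0 : Fin 2)))
    ((P 1).map MvPolynomial.C - C (MvPolynomial.X (R := R) (1 : Fin 2)))
    (natDegree_sub_C.trans_le natDegree_map_le) (natDegree_sub_C.trans_le natDegree_map_le)
    (Or.inl h0)
  let ev : MvPolynomial (Fin 2) R →ₐ[R] R[X] := MvPolynomial.aeval P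
  let evalCurve : (MvPolynomial (Fin 2) R)[X] →+* R[X] :=
    eval₂RingHom (ev : MvPolynomial (Fin 2) R →+* R[X]) X
  have evalCurve_eq_zero : ∀ i,
      evalCurve ((P i).map MvPolynomial.C - C (MvPolynomial.X i)) = 0 := fun i ↦ by
    have comp_C : (ev : MvPolynomial (Fin 2) R →+* R[X]).comp MvPolynomial.C = C :=
      ev.comp_algebraMap
    simp [evalCurve, eval₂_map, comp_C, ev]
  calc ev (implicitResultant P) = evalCurve (C (implicitResultant P)) :=
        (eval₂_C (ev : MvPolynomial (Fin 2) R →+* R[X]) X).symm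
    _ = 0 := by
      rw [implicitResultant, ← bezout, map_add, map_mul, map_mul, evalCurve_eq_zero,
        evalCurve_eq_zero, zero_mul, zero_mul, add_zero]

lemma constantCoeff_implicitResultant (P : Fin 2 → R[X]) :
    MvPolynomial.constantCoeff (implicitResultant P) = resultant (P 0) (P 1) := by
  have map_curve : ∀ i, ((P i).map MvPolynomial.C - C (MvPolynomial.X i)).map
      MvPolynomial.constantCoeff = P i := fun i ↦ by
    rw [Polynomial.map_sub, Polynomial.map_map, MvPolynomial.constantCoeff_comp_C,
      Polynomial.map_id, Polynomial.map_C, MvPolynomial.constantCoeff_X, C_0, sub_zero]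
  rw [implicitResultant, ← resultant_map_map, map_curve, map_curve]

lemma weightedTotalDegree_implicitResultant_le (P : Fin 2 → R[X]) :
    (implicitResultant P).weightedTotalDegree (fun i ↦ (P i).natDegree)
      ≤ (P 0).natDegree * (P 1).natDegree := by
  have coeff_le : ∀ i, ∀ k ≤ (P i).natDegree,
      (((P i).map MvPolynomial.C - C (MvPolynomial.X i)).coeff k).weightedTotalDegree
        (fun i ↦ (P i).natDegree) + k ≤ (P i).natDegree := by
    intro i k hk
    have wdeg_C (a : R) : (MvPolynomial.C a : MvPolynomial (Fin 2) R).weightedTotalDegree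
        (fun i ↦ (P i).natDegree) ≤ 0 :=
      weightedTotalDegree_le_of_isWeightedHomogeneous (MvPolynomial.isWeightedHomogeneous_C _ a)
    have wdeg_X : (MvPolynomial.X i : MvPolynomial (Fin 2) R).weightedTotalDegree
        (fun i ↦ (P i).natDegree) ≤ (P i).natDegree :=
      weightedTotalDegree_le_of_isWeightedHomogeneous (MvPolynomial.isWeightedHomogeneous_X _ _ i)
    rw [coeff_sub, coeff_map, coeff_C]
    split_ifs with hk0
    · subst hk0
      exact (weightedTotalDegree_sub_le _ _ _).trans (max_le ((wdeg_C _).trans hk) wdeg_X)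
    · rw [sub_zero]
      have := wdeg_C ((P i).coeff k)
      omega
  exact weightedTotalDegree_resultant_le _ (coeff_le 0) (coeff_le 1)

end ImplicitResultant

section Divisibility

lemma dvd_of_mem_of_lt_of_ringKrullDim_le_two {R : Type*} [CommRing R] [IsDomain R]
    [UniqueFactorizationMonoid R] (hdim : ringKrullDim R ≤ 2) {p q : Ideal R} [p.IsPrime]
    [q.IsPrime] (hpq : p < q) {φ ψ : R} (hφ : Irreducible φ) (hφp : φ ∈ p) (hψp : ψ ∈ p) :
    φ ∣ ψ := by
  have : (Ideal.span {φ}).IsPrime := (Ideal.span_singleton_prime hφ.ne_zero).2 hφ.prime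
  by_contra hndvd
  have bot_lt : ⊥ < Ideal.span {φ} :=
    bot_lt_iff_ne_bot.2 (Ideal.span_singleton_eq_bot.not.2 hφ.ne_zero)
  have span_lt : Ideal.span {φ} < p :=
    lt_of_le_of_ne ((Ideal.span_singleton_le_iff_mem p).2 hφp) fun h ↦
      hndvd (Ideal.mem_span_singleton.1 (h ▸ hψp))
  have three_le : 3 ≤ q.height := calc
    (3 : ℕ∞) = 0 + 1 + 1 + 1 := by norm_num
    _ ≤ (⊥ : Ideal R).height + 1 + 1 + 1 := by gcongr; exact zero_le
    _ ≤ (Ideal.span {φ}).height + 1 + 1 := by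
      gcongr; exact Ideal.height_add_one_le_of_lt_of_isPrime bot_lt
    _ ≤ p.height + 1 := by gcongr; exact Ideal.height_add_one_le_of_lt_of_isPrime span_lt
    _ ≤ q.height := Ideal.height_add_one_le_of_lt_of_isPrime hpq
  have : (q.height : WithBot ℕ∞) ≤ 2 :=
    (Ideal.height_le_ringKrullDim_of_ne_top ‹q.IsPrime›.ne_top).trans hdim
  have := three_le.trans (WithBot.coe_le_coe.1 this : q.height ≤ 2)
  norm_num at this

lemma dvd_of_aeval_eq_zero {K : Type*} [Field K] {P : Fin 2 → K[X]} {i : Fin 2}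
    (hi : (P i).natDegree ≠ 0) {φ ψ : MvPolynomial (Fin 2) K} (hφ : Irreducible φ)
    (hφP : MvPolynomial.aeval P φ = 0) (hψP : MvPolynomial.aeval P ψ = 0) : φ ∣ ψ := by
  let curve : MvPolynomial (Fin 2) K →ₐ[K] K[X] := MvPolynomial.aeval P
  let point : MvPolynomial (Fin 2) K →ₐ[K] K := (aeval 0).comp curve
  have hlt : RingHom.ker curve < RingHom.ker point := by
    refine SetLike.lt_iff_le_and_exists.2 ⟨fun f hf ↦ ?_, MvPolynomial.X i -
      MvPolynomial.C ((P i).eval 0), ?_, ?_⟩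
    · rw [RingHom.mem_ker] at hf ⊢
      rw [AlgHom.comp_apply, hf, map_zero]
    · simp [point, curve, RingHom.mem_ker, coe_aeval_eq_eval]
    · intro h
      have : P i - C ((P i).eval 0) = 0 := by simpa [curve, RingHom.mem_ker] using h
      exact hi (by rw [sub_eq_zero.1 this, natDegree_C])
  have hdim : ringKrullDim (MvPolynomial (Fin 2) K) ≤ 2 := by
    rw [MvPolynomial.ringKrullDim_of_isNoetherianRing, ringKrullDim_eq_zero_of_field]
    norm_num
  have : (RingHom.ker curve).IsPrime := RingHom.ker_isPrime _
  have : (RingHom.ker point).IsPrime := RingHom.ker_isPrime _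
  exact dvd_of_mem_of_lt_of_ringKrullDim_le_two hdim hlt hφ hφP hψP

end Divisibility

section DegreeLowerBound

lemma natDegree_minpoly_le_degreeOf {K L σ : Type*} [Field K] [Field L] [Algebra K L]
    {E : IntermediateField K L} {x : σ → L} {i : σ} (hE : ∀ j ≠ i, x j ∈ E)
    (hx : AlgebraicIndependent K fun j : {j // j ≠ i} ↦ x j) {φ : MvPolynomial σ K} (hφ : φ ≠ 0)
    (hφx : MvPolynomial.aeval x φ = 0) : (minpoly E (x i)).natDegree ≤ φ.degreeOf i := by
  classical
  let y : {j // j ≠ i} → E := fun j ↦ ⟨x j, hE j j.2⟩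
  have hy : Function.Injective (MvPolynomial.aeval y : MvPolynomial _ K →ₐ[K] E) :=
    AlgebraicIndependent.of_comp E.val hx
  let univariate : MvPolynomial σ K →ₐ[K] (MvPolynomial {j // j ≠ i} K)[X] :=
    (MvPolynomial.optionEquivLeft K _).toAlgHom.comp
      (MvPolynomial.rename (Equiv.optionSubtypeNe i).symm)
  have univariate_injective : Function.Injective univariate :=
    (MvPolynomial.optionEquivLeft K _).injective.comp
      (MvPolynomial.rename_injective _ (Equiv.injective _))
  let specialize : MvPolynomial σ K →ₐ[K] E[X] :=
    (mapAlgHom (MvPolynomial.aeval y)).comp univariate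
  have aeval_specialize : ∀ f, aeval (x i) (specialize f) = MvPolynomial.aeval x f := by
    have : ((aeval (x i)).restrictScalars K).comp specialize = MvPolynomial.aeval x := by
      ext j
      by_cases hj : j = i
      · subst hj
        simp [specialize, univariate]
      · simp [specialize, univariate, hj, y]
    exact DFunLike.congr_fun this
  have specialize_ne_zero : specialize φ ≠ 0 :=
    (map_ne_zero_iff _ ((map_injective _ hy).comp univariate_injective)).2 hφ
  calc (minpoly E (x i)).natDegree ≤ (specialize φ).natDegree :=
        natDegree_le_natDegree <| minpoly.degree_le_of_ne_zero E (x i) specialize_ne_zero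
          ((aeval_specialize φ).trans hφx)
    _ ≤ (univariate φ).natDegree := natDegree_map_le
    _ = φ.degreeOf i := (MvPolynomial.degreeOf_eq_natDegree i φ).symm

end DegreeLowerBound

section ParameterField

variable {K : Type*} [Field K] {ι : Type*}

/-- The subfield `K(P i : i)` of `K(t)`. It is all of `K(t)` exactly when the parameterization
`t ↦ (P i (t))ᵢ` is birational onto its image. -/
noncomputable def parameterField (P : ι → K[X]) : IntermediateField K (RatFunc K) :=
  IntermediateField.adjoin K (Set.range fun i ↦ algebraMap K[X] (RatFunc K) (P i))

lemma transcendental_algebraMap_ratFunc {p : K[X]} (hp : p.natDegree ≠ 0) :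
    Transcendental K (algebraMap K[X] (RatFunc K) p) :=
  (transcendental_algebraMap_iff (FaithfulSMul.algebraMap_injective _ _)).2
    (Polynomial.transcendental p hp (mem_nonZeroDivisors_of_ne_zero (leadingCoeff_ne_zero.2
      (by rintro rfl; exact hp natDegree_zero))))

lemma natDegree_minpoly_of_adjoin_pair_eq_top {p q : K[X]} (hp : p.natDegree ≠ 0)
    (htop : IntermediateField.adjoin K
      {algebraMap K[X] (RatFunc K) p, algebraMap K[X] (RatFunc K) q} = ⊤) :
    (minpoly (IntermediateField.adjoin K {algebraMap K[X] (RatFunc K) p})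
      (algebraMap K[X] (RatFunc K) q)).natDegree = p.natDegree := by
  set x := algebraMap K[X] (RatFunc K) p
  set y := algebraMap K[X] (RatFunc K) q
  have adjoin_y : IntermediateField.adjoin (IntermediateField.adjoin K {x}) {y} = ⊤ := by
    rw [← IntermediateField.restrictScalars_eq_top_iff (K := K),
      IntermediateField.adjoin_adjoin_left, Set.singleton_union, htop]
  have : Algebra.IsAlgebraic (IntermediateField.adjoin K {x}) (RatFunc K) := by
    refine x.isAlgebraic_adjoin_simple_X' fun ⟨c, hc⟩ ↦ ?_
    have hx : Transcendental K x := transcendental_algebraMap_ratFunc hp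
    exact hx (hc ▸ isAlgebraic_algebraMap c)
  calc (minpoly (IntermediateField.adjoin K {x}) y).natDegree
      = Module.finrank (IntermediateField.adjoin K {x}) (RatFunc K) := by
        rw [← IntermediateField.adjoin.finrank (Algebra.IsAlgebraic.isAlgebraic y).isIntegral,
          adjoin_y, IntermediateField.finrank_top']
    _ = p.natDegree := by
        rw [RatFunc.finrank_eq_max_natDegree, RatFunc.num_algebraMap, RatFunc.denom_algebraMap,
          natDegree_one, Nat.max_zero]

lemma natDegree_le_degreeOf_of_parameterField_eq_top {P : Fin 2 → K[X]}
    (htop : parameterField P = ⊤) {i j : Fin 2} (hij : i ≠ j) (hj : (P j).natDegree ≠ 0)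
    {φ : MvPolynomial (Fin 2) K} (hφ : φ ≠ 0) (hφP : MvPolynomial.aeval P φ = 0) :
    (P j).natDegree ≤ φ.degreeOf i := by
  let x : Fin 2 → RatFunc K := fun k ↦ algebraMap K[X] (RatFunc K) (P k)
  have eq_j : ∀ k, k ≠ i → k = j := by omega
  have pair_eq_top : IntermediateField.adjoin K {x j, x i} = ⊤ := by
    have range_x : Set.range x = {x j, x i} := by
      refine Set.Subset.antisymm (Set.range_subset_iff.2 fun k ↦ ?_)
        (Set.pair_subset (Set.mem_range_self j) (Set.mem_range_self i))
      by_cases hk : k = i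
      · exact Or.inr (congrArg x hk)
      · exact Or.inl (congrArg x (eq_j k hk))
    rw [← htop, parameterField, range_x]
  have indep : AlgebraicIndependent K fun k : {k // k ≠ i} ↦ x k := by
    let _ : Unique {k // k ≠ i} := ⟨⟨⟨j, hij.symm⟩⟩, fun k ↦ Subtype.ext (eq_j k k.2)⟩
    exact algebraicIndependent_unique_type_iff.2 (transcendental_algebraMap_ratFunc hj)
  have hφx : MvPolynomial.aeval x φ = 0 :=
    (MvPolynomial.aeval_algebraMap_apply (RatFunc K) P φ).trans (by rw [hφP, map_zero])
  rw [← natDegree_minpoly_of_adjoin_pair_eq_top hj pair_eq_top]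
  refine natDegree_minpoly_le_degreeOf (fun k hk ↦ ?_) indep hφ hφx
  rw [eq_j k hk]
  exact IntermediateField.mem_adjoin_simple_self K _

lemma map_minpoly_X_dvd {E : IntermediateField K (RatFunc K)} {p : K[X]}
    (hp : algebraMap K[X] (RatFunc K) p ∈ E) :
    (minpoly E (RatFunc.X : RatFunc K)).map (algebraMap E (RatFunc K)) ∣
      (p.map C - C p).map (algebraMap K[X] (RatFunc K)) := by
  let x : E := ⟨algebraMap K[X] (RatFunc K) p, hp⟩
  have aeval_X : aeval (RatFunc.X : RatFunc K) p = algebraMap K[X] (RatFunc K) p := by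
    rw [← RatFunc.algebraMap_X, aeval_algebraMap_apply, aeval_X_left_apply]
  have aeval_eq_zero : aeval (RatFunc.X : RatFunc K) (p.map (algebraMap K E) - C x) = 0 := by
    rw [map_sub, aeval_map_algebraMap, aeval_C, aeval_X]
    exact sub_self _
  have map_eq : (p.map (algebraMap K E) - C x).map (algebraMap E (RatFunc K)) =
      (p.map C - C p).map (algebraMap K[X] (RatFunc K)) := by
    simp only [Polynomial.map_sub, Polynomial.map_map, Polynomial.map_C]
    rfl
  exact map_eq ▸ Polynomial.map_dvd _ (minpoly.dvd E _ aeval_eq_zero)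

lemma isIntegral_ratFunc_X {E : IntermediateField K (RatFunc K)} {p : K[X]}
    (hp0 : p.natDegree ≠ 0) (hp : algebraMap K[X] (RatFunc K) p ∈ E) :
    IsIntegral E (RatFunc.X : RatFunc K) := by
  refine (RatFunc.IntermediateField.isAlgebraic_X fun hE ↦ ?_).isIntegral
  obtain ⟨c, hc⟩ := IntermediateField.mem_bot.1 (hE ▸ hp)
  exact transcendental_algebraMap_ratFunc hp0 (hc ▸ isAlgebraic_algebraMap c)

lemma exists_monic_map_eq_minpoly_X {E : IntermediateField K (RatFunc K)} {p : K[X]}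
    (hp0 : p.natDegree ≠ 0) (hp : algebraMap K[X] (RatFunc K) p ∈ E) :
    ∃ m : K[X][X], m.Monic ∧ m.map (algebraMap K[X] (RatFunc K)) =
      (minpoly E (RatFunc.X : RatFunc K)).map (algebraMap E (RatFunc K)) := by
  have hX := isIntegral_ratFunc_X hp0 hp
  have p_ne_zero : p ≠ 0 := by rintro rfl; exact hp0 natDegree_zero
  let q : K[X] := p * C p.leadingCoeff⁻¹
  have hq : q.Monic := monic_mul_leadingCoeff_inv p_ne_zero
  have hqE : algebraMap K[X] (RatFunc K) q ∈ E := by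
    rw [map_mul]
    exact mul_mem hp (E.algebraMap_mem _)
  have curve_monic : (q.map C - C q).Monic := by
    refine (hq.map C).sub_of_left (degree_C_le.trans_lt ?_)
    rw [hq.degree_map, ← natDegree_pos_iff_degree_pos, natDegree_mul_leadingCoeff_inv _ p_ne_zero]
    exact Nat.pos_of_ne_zero hp0
  have minpoly_monic := (minpoly.monic hX).map (algebraMap E (RatFunc K))
  obtain ⟨m, hm⟩ := IsIntegrallyClosed.eq_map_mul_C_of_dvd (RatFunc K) curve_monic
    (map_minpoly_X_dvd hqE)
  rw [minpoly_monic.leadingCoeff, C_1, mul_one] at hm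
  exact ⟨m, monic_of_injective (FaithfulSMul.algebraMap_injective _ _) (hm ▸ minpoly_monic), hm⟩

lemma exists_natDegree_ne_zero_of_mem_span {P : ι → K[X]} {a : K}
    (hspan : X - C a ∈ Ideal.span (Set.range fun i ↦ P i - C ((P i).eval a))) :
    ∃ i, (P i).natDegree ≠ 0 := by
  by_contra! hP
  have span_le_bot : Ideal.span (Set.range fun i ↦ P i - C ((P i).eval a)) ≤ ⊥ := by
    refine Ideal.span_le.2 (Set.range_subset_iff.2 fun i ↦ ?_)
    obtain ⟨c, hc⟩ := natDegree_eq_zero.1 (hP i)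
    simp [← hc]
  exact X_sub_C_ne_zero a (span_le_bot hspan)

-- The minimal polynomial of `t` over `E` has coefficients in `K[t]`, so it can be specialized to
-- `t = a`, where it divides every `P i - P i (a)` and hence `X - C a`.
lemma natDegree_minpoly_X_le_one {E : IntermediateField K (RatFunc K)} {P : ι → K[X]} {a : K}
    (hPE : ∀ i, algebraMap K[X] (RatFunc K) (P i) ∈ E)
    (hspan : X - C a ∈ Ideal.span (Set.range fun i ↦ P i - C ((P i).eval a))) :
    (minpoly E (RatFunc.X : RatFunc K)).natDegree ≤ 1 := by
  obtain ⟨i, hi⟩ := exists_natDegree_ne_zero_of_mem_span hspan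
  obtain ⟨m, m_monic, hm⟩ := exists_monic_map_eq_minpoly_X hi (hPE i)
  have m_dvd : ∀ i, m ∣ (P i).map C - C (P i) := fun i ↦
    (map_dvd_map (algebraMap K[X] (RatFunc K)) (FaithfulSMul.algebraMap_injective _ _) m_monic).1
      (hm ▸ map_minpoly_X_dvd (hPE i))
  have specialized_dvd : ∀ i, m.map (evalRingHom a) ∣ P i - C ((P i).eval a) := fun i ↦ by
    have comp_C : (evalRingHom a).comp C = RingHom.id K := RingHom.ext fun c ↦ eval_C
    simpa [Polynomial.map_map, comp_C] using Polynomial.map_dvd (evalRingHom a) (m_dvd i)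
  have dvd_X_sub_C : m.map (evalRingHom a) ∣ X - C a := by
    refine Ideal.mem_span_singleton.1 (Ideal.span_le.2 (Set.range_subset_iff.2 fun i ↦ ?_) hspan)
    exact Ideal.mem_span_singleton.2 (specialized_dvd i)
  calc (minpoly E (RatFunc.X : RatFunc K)).natDegree
      = (m.map (algebraMap K[X] (RatFunc K))).natDegree := by rw [hm, natDegree_map]
    _ = (m.map (evalRingHom a)).natDegree := by rw [m_monic.natDegree_map, m_monic.natDegree_map]
    _ ≤ (X - C a).natDegree := natDegree_le_of_dvd dvd_X_sub_C (X_sub_C_ne_zero a)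
    _ = 1 := natDegree_X_sub_C a

lemma parameterField_eq_top {P : ι → K[X]} {a : K}
    (hspan : X - C a ∈ Ideal.span (Set.range fun i ↦ P i - C ((P i).eval a))) :
    parameterField P = ⊤ := by
  have hP : ∀ i, algebraMap K[X] (RatFunc K) (P i) ∈ parameterField P := fun i ↦
    IntermediateField.subset_adjoin _ _ (Set.mem_range_self i)
  obtain ⟨i, hi⟩ := exists_natDegree_ne_zero_of_mem_span hspan
  have hX := isIntegral_ratFunc_X hi (hP i)
  have natDegree_eq_one : (minpoly (parameterField P) (RatFunc.X : RatFunc K)).natDegree = 1 :=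
    le_antisymm (natDegree_minpoly_X_le_one hP hspan) (minpoly.natDegree_pos hX)
  obtain ⟨x, hx⟩ := minpoly.natDegree_eq_one_iff.1 natDegree_eq_one
  rw [← top_le_iff, ← RatFunc.adjoin_X, IntermediateField.adjoin_simple_le_iff, ← hx]
  exact x.2

lemma X_sub_C_mem_span_of_isCoprime {p q r : K[X]} {a : K}
    (hr : p - C (p.eval a) = (X - C a) * r) (hcop : IsCoprime r (q - C (q.eval a))) :
    X - C a ∈ Ideal.span {p - C (p.eval a), q - C (q.eval a)} := by
  obtain ⟨u, v, huv⟩ := hcop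
  refine Ideal.mem_span_pair.2 ⟨u, v * (X - C a), ?_⟩
  linear_combination (X - C a) * huv + u * hr

lemma parameterField_eq_top_of_isCoprime {P : ι → K[X]} {i j : ι} {r : K[X]} {a : K}
    (hr : P i - C ((P i).eval a) = (X - C a) * r)
    (hcop : IsCoprime r (P j - C ((P j).eval a))) : parameterField P = ⊤ :=
  parameterField_eq_top <| Ideal.span_mono
    (Set.pair_subset (Set.mem_range_self i) (Set.mem_range_self j))
    (X_sub_C_mem_span_of_isCoprime hr hcop)

end ParameterField

section ImplicitEquation

variable {K : Type*} [Field K] {P : Fin 2 → K[X]}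

lemma mul_add_mul_le_of_mem_support_implicitResultant {d : Fin 2 →₀ ℕ}
    (hd : d ∈ (implicitResultant P).support) :
    (P 0).natDegree * d 0 + (P 1).natDegree * d 1 ≤ (P 0).natDegree * (P 1).natDegree := by
  have := (MvPolynomial.le_weightedTotalDegree (fun i ↦ (P i).natDegree) hd).trans
    (weightedTotalDegree_implicitResultant_le P)
  rw [Finsupp.weight_apply, Finsupp.sum_fintype _ _ (by simp), Fin.sum_univ_two] at this
  simpa only [smul_eq_mul, mul_comm] using this

lemma degreeOf_implicitResultant_le {i j : Fin 2} (hij : i ≠ j) (hi : (P i).natDegree ≠ 0) :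
    (implicitResultant P).degreeOf i ≤ (P j).natDegree := by
  refine MvPolynomial.degreeOf_le_iff.2 fun d hd ↦ ?_
  have hweight := mul_add_mul_le_of_mem_support_implicitResultant hd
  have : (P i).natDegree * d i ≤ (P i).natDegree * (P j).natDegree := by
    obtain ⟨rfl, rfl⟩ | ⟨rfl, rfl⟩ : i = 0 ∧ j = 1 ∨ i = 1 ∧ j = 0 := by omega
    · exact le_of_add_le_left hweight
    · exact (le_of_add_le_right hweight).trans_eq (mul_comm _ _)
  exact Nat.le_of_mul_le_mul_left this (Nat.pos_of_ne_zero hi)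

lemma support_eq_of_dvd_of_degreeOf_le {σ : Type*} {φ ψ : MvPolynomial σ K} (hdvd : φ ∣ ψ)
    (hψ : ψ ≠ 0) (hdeg : ∀ i, ψ.degreeOf i ≤ φ.degreeOf i) : φ.support = ψ.support := by
  obtain ⟨q, rfl⟩ := hdvd
  obtain ⟨hφ, hq⟩ := mul_ne_zero_iff.1 hψ
  have degreeOf_q : ∀ i, q.degreeOf i = 0 := fun i ↦ by
    have := hdeg i
    rw [MvPolynomial.degreeOf_mul_eq hφ hq] at this
    omega
  obtain ⟨c, rfl⟩ : ∃ c, q = MvPolynomial.C c := by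
    refine ⟨_, MvPolynomial.vars_eq_empty_iff_eq_C.1 (Finset.eq_empty_of_forall_notMem fun i ↦ ?_)⟩
    rw [MvPolynomial.mem_vars_iff_degreeOf_ne_zero, not_not, degreeOf_q]
  have hc : c ≠ 0 := fun h ↦ hq (by rw [h, MvPolynomial.C_0])
  rw [mul_comm, MvPolynomial.C_mul', MvPolynomial.support_smul_eq hc]

lemma support_eq_support_implicitResultant (hP : ∀ i, (P i).natDegree ≠ 0)
    (hR : implicitResultant P ≠ 0) (htop : parameterField P = ⊤) {φ : MvPolynomial (Fin 2) K}
    (hφ : Irreducible φ) (hφP : MvPolynomial.aeval P φ = 0) :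
    φ.support = (implicitResultant P).support := by
  refine support_eq_of_dvd_of_degreeOf_le
    (dvd_of_aeval_eq_zero (hP 0) hφ hφP (aeval_implicitResultant P (hP 0))) hR fun i ↦ ?_
  have hi : i ≠ 1 - i := by fin_cases i <;> decide
  exact (degreeOf_implicitResultant_le hi (hP i)).trans
    (natDegree_le_degreeOf_of_parameterField_eq_top htop hi (hP _) hφ.ne_zero hφP)

end ImplicitEquation

section NewtonPolygon

lemma mem_convexHull_triangle {a b x y : ℝ} (ha : 0 < a) (hb : 0 < b) (hx : 0 ≤ x) (hy : 0 ≤ y)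
    (hxy : b * x + a * y ≤ a * b) : (x, y) ∈ convexHull ℝ {((0 : ℝ), (0 : ℝ)), (a, 0), (0, b)} := by
  have hweight : x / a + y / b ≤ 1 := by
    rw [div_add_div _ _ ha.ne' hb.ne', div_le_one (mul_pos ha hb)]
    linarith
  have combination_mem := (convex_convexHull ℝ {((0 : ℝ), (0 : ℝ)), (a, 0), (0, b)}).sum_mem
    (t := Finset.univ) (w := ![1 - (x / a + y / b), x / a, y / b])
    (z := ![((0 : ℝ), (0 : ℝ)), (a, 0), (0, b)])
    (by simp [Fin.forall_fin_succ, hweight, div_nonneg, hx, hy, ha.le, hb.le])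
    (by simp only [Fin.sum_univ_three, Matrix.cons_val]; ring)
    (fun i _ ↦ subset_convexHull ℝ _ (by fin_cases i <;> simp))
  simpa [Fin.sum_univ_three, ha.ne', hb.ne'] using combination_mem

lemma exists_mem_support_eq_degreeOf {σ R : Type*} [CommSemiring R] {φ : MvPolynomial σ R}
    (hφ : φ ≠ 0) (i : σ) : ∃ d ∈ φ.support, d i = φ.degreeOf i := by
  classical
  obtain ⟨d, hd, h⟩ := φ.support.exists_mem_eq_sup (MvPolynomial.support_nonempty.2 hφ)
    (fun d ↦ d i)
  exact ⟨d, hd, by rw [MvPolynomial.degreeOf_eq_sup, h]⟩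

lemma newtonPolygon_eq_triangle {φ : MvPolynomial (Fin 2) ℂ} {n m : ℕ} (hn : 0 < n) (hm : 0 < m)
    (hzero : 0 ∈ φ.support) (hweight : ∀ d ∈ φ.support, n * d 0 + m * d 1 ≤ n * m)
    (hdeg0 : m ≤ φ.degreeOf 0) (hdeg1 : n ≤ φ.degreeOf 1) :
    newtonPolygon φ =
      convexHull ℝ {((0 : ℝ), (0 : ℝ)), ((m : ℝ), (0 : ℝ)), ((0 : ℝ), (n : ℝ))} := by
  have hφ : φ ≠ 0 := fun h ↦ by simp [h] at hzero
  obtain ⟨d, hd, hd0⟩ := exists_mem_support_eq_degreeOf hφ 0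
  obtain ⟨e, he, he1⟩ := exists_mem_support_eq_degreeOf hφ 1
  have hd_eq : d 0 = m ∧ d 1 = 0 := by
    have := hweight d hd
    constructor <;> nlinarith
  have he_eq : e 0 = 0 ∧ e 1 = n := by
    have := hweight e he
    constructor <;> nlinarith
  apply (convexHull_min _ (convex_convexHull ℝ _)).antisymm (convexHull_mono _)
  · rintro _ ⟨d, hd, rfl⟩
    have := hweight d hd
    exact mem_convexHull_triangle (Nat.cast_pos.2 hm) (Nat.cast_pos.2 hn) (Nat.cast_nonneg _)
      (Nat.cast_nonneg _) (by exact_mod_cast this.trans_eq (mul_comm _ _))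
  · rintro _ (rfl | rfl | rfl)
    exacts [⟨0, hzero, by simp⟩, ⟨d, hd, by simp [hd_eq]⟩, ⟨e, he, by simp [he_eq]⟩]

lemma newtonPolygon_eq_triangle_of_isCoprime {P : Fin 2 → ℂ[X]} (hP : ∀ i, (P i).natDegree ≠ 0)
    (hcop : IsCoprime (P 0) (P 1)) (htop : parameterField P = ⊤) {φ : MvPolynomial (Fin 2) ℂ}
    (hφ : Irreducible φ) (hφP : MvPolynomial.aeval P φ = 0) :
    newtonPolygon φ = convexHull ℝ {((0 : ℝ), (0 : ℝ)), (((P 1).natDegree : ℝ), (0 : ℝ)),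
      ((0 : ℝ), ((P 0).natDegree : ℝ))} := by
  have hzero : MvPolynomial.constantCoeff (implicitResultant P) ≠ 0 := by
    rw [constantCoeff_implicitResultant]
    exact resultant_ne_zero _ _ hcop
  have hsupp := support_eq_support_implicitResultant hP (by rintro h; simp [h] at hzero) htop hφ hφP
  apply newtonPolygon_eq_triangle (Nat.pos_of_ne_zero (hP 0)) (Nat.pos_of_ne_zero (hP 1))
  · rwa [hsupp, MvPolynomial.mem_support_iff]
  · intro d hd
    exact mul_add_mul_le_of_mem_support_implicitResultant (hsupp ▸ hd)
  · exact natDegree_le_degreeOf_of_parameterField_eq_top htop zero_ne_one (hP 1) hφ.ne_zero hφP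
  · exact natDegree_le_degreeOf_of_parameterField_eq_top htop one_ne_zero (hP 0) hφ.ne_zero hφP

end NewtonPolygon

section Generic

variable {σ K : Type*} [Field K]

/-- The filter of generic coefficient vectors: a property holds eventually for it if it holds
wherever some fixed nonzero polynomial in the coefficients does not vanish. -/
def generic (σ K : Type*) [Field K] : Filter (σ → K) where
  sets := {s | ∃ G : MvPolynomial σ K, G ≠ 0 ∧ ∀ c, MvPolynomial.eval c G ≠ 0 → c ∈ s}
  univ_sets := ⟨1, one_ne_zero, fun _ _ ↦ Set.mem_univ _⟩
  sets_of_superset := fun ⟨G, hG, h⟩ hst ↦ ⟨G, hG, fun c hc ↦ hst (h c hc)⟩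
  inter_sets := fun ⟨G, hG, h⟩ ⟨G', hG', h'⟩ ↦ ⟨G * G', mul_ne_zero hG hG', fun c hc ↦ by
    rw [map_mul, mul_ne_zero_iff] at hc
    exact ⟨h c hc.1, h' c hc.2⟩⟩

lemma eventually_generic {p : (σ → K) → Prop} : (∀ᶠ c in generic σ K, p c) ↔
    ∃ G : MvPolynomial σ K, G ≠ 0 ∧ ∀ c, MvPolynomial.eval c G ≠ 0 → p c := Iff.rfl

instance generic_neBot [Infinite K] : (generic σ K).NeBot := by
  refine ⟨fun h ↦ ?_⟩
  obtain ⟨G, hG, hvanish⟩ := eventually_generic.1 (Filter.eventually_false_iff_eq_bot.2 h)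
  exact hG (MvPolynomial.funext fun c ↦ by simpa using hvanish c)

lemma eventually_eval_ne_zero {G : MvPolynomial σ K} (hG : G ≠ 0) :
    ∀ᶠ c in generic σ K, MvPolynomial.eval c G ≠ 0 := eventually_generic.2 ⟨G, hG, fun _ ↦ id⟩

lemma eventually_natDegree_map_eval (U : (MvPolynomial σ K)[X]) :
    ∀ᶠ c in generic σ K, (U.map (MvPolynomial.eval c)).natDegree = U.natDegree := by
  obtain rfl | hU := eq_or_ne U 0
  · simp
  · filter_upwards [eventually_eval_ne_zero (leadingCoeff_ne_zero.2 hU)] with c hc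
    exact natDegree_map_of_leadingCoeff_ne_zero _ hc

lemma eventually_map_eval_ne_zero {U : (MvPolynomial σ K)[X]} (hU : U ≠ 0) :
    ∀ᶠ c in generic σ K, U.map (MvPolynomial.eval c) ≠ 0 := by
  filter_upwards [eventually_eval_ne_zero (leadingCoeff_ne_zero.2 hU)] with c hc h
  exact hc (by simpa using congrArg (coeff · U.natDegree) h)

lemma eventually_isCoprime_map_eval {U V : (MvPolynomial σ K)[X]} {c₀ : σ → K} (hU : U ≠ 0)
    (hU₀ : (U.map (MvPolynomial.eval c₀)).natDegree = U.natDegree)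
    (hV₀ : (V.map (MvPolynomial.eval c₀)).natDegree = V.natDegree)
    (hcop : IsCoprime (U.map (MvPolynomial.eval c₀)) (V.map (MvPolynomial.eval c₀))) :
    ∀ᶠ c in generic σ K,
      IsCoprime (U.map (MvPolynomial.eval c)) (V.map (MvPolynomial.eval c)) := by
  have resultant_ne : resultant U V ≠ 0 := fun h ↦ resultant_ne_zero _ _ hcop <| by
    rw [hU₀, hV₀, resultant_map_map, h, map_zero]
  filter_upwards [eventually_eval_ne_zero resultant_ne, eventually_map_eval_ne_zero hU,
    eventually_natDegree_map_eval U, eventually_natDegree_map_eval V] with c hres hUc hdegU hdegV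
  by_contra hnot
  have := resultant_eq_zero_iff.2 ⟨Or.inl hUc, hnot⟩
  rw [hdegU, hdegV, resultant_map_map] at this
  exact hres this

end Generic

section GenericCombination

variable {K : Type*} [Field K] {ι : Type*} {κ : ι → Type*} [∀ i, Fintype (κ i)] {i j : ι}

/-- The linear combination of the polynomials `f s`, for `s : κ i`, whose coefficients are the
indeterminates `X ⟨i, s⟩`. -/
noncomputable def genericCombination (f : κ i → K[X]) : (MvPolynomial (Σ i, κ i) K)[X] :=
  ∑ s, C (MvPolynomial.X ⟨i, s⟩) * (f s).map MvPolynomial.C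

lemma map_eval_genericCombination (f : κ i → K[X]) (c : (Σ i, κ i) → K) :
    (genericCombination f).map (MvPolynomial.eval c) = ∑ s, c ⟨i, s⟩ • f s := by
  have comp_C : (MvPolynomial.eval c).comp MvPolynomial.C = RingHom.id K :=
    RingHom.ext (MvPolynomial.eval_C ·)
  simp [genericCombination, Polynomial.map_sum, Polynomial.map_map, comp_C, smul_eq_C_mul]

lemma exists_sum_smul_eq (f : κ i → K[X]) (s : κ i) :
    ∃ c : (Σ i, κ i) → K, ∑ s', c ⟨i, s'⟩ • f s' = f s := by
  classical
  refine ⟨fun x ↦ if x = ⟨i, s⟩ then 1 else 0, ?_⟩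
  simp

lemma genericCombination_ne_zero {f : κ i → K[X]} (hf : ∃ s, f s ≠ 0) :
    genericCombination f ≠ 0 := by
  obtain ⟨s, hs⟩ := hf
  obtain ⟨c, hc⟩ := exists_sum_smul_eq f s
  intro h
  rw [← map_eval_genericCombination, h, Polynomial.map_zero] at hc
  exact hs hc.symm

lemma eventually_map_sum_smul_ne_zero (L : K[X] →ₗ[K] K) {f : κ i → K[X]}
    (hf : ∃ s, L (f s) ≠ 0) : ∀ᶠ c in generic (Σ i, κ i) K, L (∑ s, c ⟨i, s⟩ • f s) ≠ 0 := by
  let G : MvPolynomial (Σ i, κ i) K := ∑ s, MvPolynomial.X ⟨i, s⟩ * MvPolynomial.C (L (f s))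
  have eval_G (c) : MvPolynomial.eval c G = L (∑ s, c ⟨i, s⟩ • f s) := by simp [G]
  obtain ⟨s, hs⟩ := hf
  obtain ⟨c₀, hc₀⟩ := exists_sum_smul_eq f s
  have hG : G ≠ 0 := fun h ↦ hs (by rw [← hc₀, ← eval_G, h, map_zero])
  filter_upwards [eventually_eval_ne_zero hG] with c hc
  rwa [← eval_G]

lemma eventually_forall_not_isRoot {f : κ i → K[X]} {Z : Set K} (hZ : Z.Finite)
    (hf : ∀ t ∈ Z, ∃ s, (f s).eval t ≠ 0) :
    ∀ᶠ c in generic (Σ i, κ i) K, ∀ t ∈ Z, ¬ (∑ s, c ⟨i, s⟩ • f s).IsRoot t :=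
  (Filter.eventually_all_finite hZ).2 fun t ht ↦ eventually_map_sum_smul_ne_zero (leval t) (hf t ht)

-- The two combinations involve disjoint sets of coefficients, so these can be chosen in turn.
lemma eventually_isCoprime_sum_smul [IsAlgClosed K] (hij : i ≠ j) {f : κ i → K[X]}
    {g : κ j → K[X]} (hf : ∃ s, f s ≠ 0) (hg : ∃ s, g s ≠ 0)
    (hroot : ∀ t, (∃ s, (f s).eval t ≠ 0) ∨ ∃ s, (g s).eval t ≠ 0) :
    ∀ᶠ c in generic (Σ i, κ i) K,
      IsCoprime (∑ s, c ⟨i, s⟩ • f s) (∑ s, c ⟨j, s⟩ • g s) := by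
  classical
  have finite_common_roots : {t | ∀ s, (g s).IsRoot t}.Finite := by
    obtain ⟨s, hs⟩ := hg
    exact (finite_setOfPred_isRoot hs).subset fun t ht ↦ ht s
  obtain ⟨c₁, hdeg₁, hne₁, hc₁⟩ := ((eventually_natDegree_map_eval (genericCombination f)).and <|
    (eventually_map_eval_ne_zero (genericCombination_ne_zero hf)).and <|
    eventually_forall_not_isRoot finite_common_roots fun t ht ↦
      (hroot t).resolve_right fun ⟨s, hs⟩ ↦ hs (ht s)).exists
  rw [map_eval_genericCombination] at hne₁
  obtain ⟨c₂, hdeg₂, hc₂⟩ := ((eventually_natDegree_map_eval (genericCombination g)).and <|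
    eventually_forall_not_isRoot (f := g) (finite_setOfPred_isRoot hne₁) fun t ht ↦ by
      by_contra! h
      exact hc₁ t h ht).exists
  let c₀ : (Σ i, κ i) → K := fun x ↦ if x.1 = i then c₁ x else c₂ x
  have specialize_f : (genericCombination f).map (MvPolynomial.eval c₀) =
      (genericCombination f).map (MvPolynomial.eval c₁) := by
    simp [map_eval_genericCombination, c₀]
  have specialize_g : (genericCombination g).map (MvPolynomial.eval c₀) =
      (genericCombination g).map (MvPolynomial.eval c₂) := by
    simp [map_eval_genericCombination, c₀, hij.symm]
  simp_rw [← map_eval_genericCombination]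
  apply eventually_isCoprime_map_eval (c₀ := c₀) (genericCombination_ne_zero hf)
  · rw [specialize_f, hdeg₁]
  · rw [specialize_g, hdeg₂]
  · rw [specialize_f, specialize_g, isCoprime_iff_aeval_ne_zero_of_isAlgClosed K K]
    intro t
    simp_rw [map_eval_genericCombination, coe_aeval_eq_eval]
    exact or_iff_not_imp_left.2 fun ht ↦ hc₂ t (not_not.1 ht)

end GenericCombination

section Parameterization

/-- The family of polynomials with supports `A i` and coefficient vector `c`. -/
noncomputable def parameterization {ι : Type*} (A : ι → Finset ℕ)
    (c : (Σ i, {s // s ∈ A i}) → ℂ) (i : ι) : ℂ[X] :=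
  polyOfCoeffs (A i) fun s ↦ c ⟨i, s⟩

lemma polyOfCoeffs_eq_sum_smul (S : Finset ℕ) (c : {s // s ∈ S} → ℂ) :
    polyOfCoeffs S c = ∑ s, c s • X ^ (s : ℕ) := by
  simp only [polyOfCoeffs, smul_eq_C_mul, Finset.univ_eq_attach]

lemma vanishesPoly_iff {A : Fin 2 → Finset ℕ} {c : (Σ i, {s // s ∈ A i}) → ℂ}
    {φ : MvPolynomial (Fin 2) ℂ} :
    vanishesPoly A c φ ↔ MvPolynomial.aeval (parameterization A c) φ = 0 := by
  have : ![polyOfCoeffs (A 0) (fun s ↦ c ⟨0, s⟩), polyOfCoeffs (A 1) (fun s ↦ c ⟨1, s⟩)] =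
      parameterization A c := by
    ext1 i
    fin_cases i <;> rfl
  rw [vanishesPoly, this]

lemma pow_eq_one_of_gcd {M : Type*} [Monoid M] {S : Finset ℕ} (hS : S.gcd id = 1) {t : M}
    (ht : ∀ s ∈ S, t ^ s = 1) : t = 1 := by
  rw [← orderOf_eq_one_iff, ← Nat.dvd_one, ← hS]
  exact Finset.dvd_gcd fun s hs ↦ orderOf_dvd_of_pow_eq_one (ht s hs)

variable {ι : Type*} {A : ι → Finset ℕ} {i j : ι}

lemma eventually_natDegree_parameterization (hA : (A i).Nonempty) :
    ∀ᶠ c in generic (Σ i, {s // s ∈ A i}) ℂ,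
      (parameterization A c i).natDegree = (A i).max' hA := by
  have leading_monomial : ∃ s : {s // s ∈ A i}, lcoeff ℂ ((A i).max' hA) (X ^ (s : ℕ)) ≠ 0 :=
    ⟨⟨_, (A i).max'_mem hA⟩, by simp⟩
  filter_upwards [eventually_map_sum_smul_ne_zero _ leading_monomial] with c hc
  rw [parameterization, polyOfCoeffs_eq_sum_smul]
  refine le_antisymm (natDegree_sum_le_of_forall_le _ _ fun s _ ↦ ?_) (le_natDegree_of_ne_zero hc)
  exact (natDegree_smul_le _ _).trans ((natDegree_X_pow_le _).trans ((A i).le_max' _ s.2))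

lemma eventually_isCoprime_parameterization (hij : i ≠ j) (hi : (A i).Nonempty)
    (hj : (A j).Nonempty) (hconst : 0 ∈ A i ∨ 0 ∈ A j) :
    ∀ᶠ c in generic (Σ i, {s // s ∈ A i}) ℂ,
      IsCoprime (parameterization A c i) (parameterization A c j) := by
  simp only [parameterization, polyOfCoeffs_eq_sum_smul]
  refine eventually_isCoprime_sum_smul hij ⟨⟨_, hi.choose_spec⟩, pow_ne_zero _ X_ne_zero⟩
    ⟨⟨_, hj.choose_spec⟩, pow_ne_zero _ X_ne_zero⟩ fun t ↦ ?_
  exact hconst.imp (fun h ↦ ⟨⟨0, h⟩, by simp⟩) (fun h ↦ ⟨⟨0, h⟩, by simp⟩)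

lemma parameterization_sub_C_eval_one (c : (Σ i, {s // s ∈ A i}) → ℂ) :
    parameterization A c i - C ((parameterization A c i).eval 1) =
      ∑ s : {s // s ∈ A i}, c ⟨i, s⟩ • (X ^ (s : ℕ) - 1) := by
  simp [parameterization, polyOfCoeffs_eq_sum_smul, eval_finsetSum, smul_sub, smul_eq_C_mul,
    map_sum]

lemma eventually_parameterField_eq_top (hij : i ≠ j) (hi : ∃ s ∈ A i, s ≠ 0)
    (hj : ∃ s ∈ A j, s ≠ 0)
    (hA : ∀ t : ℂ, (∀ s ∈ A i, t ^ s = 1) → (∀ s ∈ A j, t ^ s = 1) → t = 1) :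
    ∀ᶠ c in generic (Σ i, {s // s ∈ A i}) ℂ, parameterField (parameterization A c) = ⊤ := by
  let geom (s : {s // s ∈ A i}) : ℂ[X] := ∑ k ∈ Finset.range s, X ^ k
  let powSubOne (s : {s // s ∈ A j}) : ℂ[X] := X ^ (s : ℕ) - 1
  obtain ⟨n, hn, hn0⟩ := hi
  obtain ⟨m, hm, hm0⟩ := hj
  have eval_geom_ne_zero : (geom ⟨n, hn⟩).eval 1 ≠ 0 := by simpa [geom, eval_finsetSum]
  have no_common_root (t : ℂ) :
      (∃ s, (geom s).eval t ≠ 0) ∨ ∃ s, (powSubOne s).eval t ≠ 0 := by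
    by_contra! h
    have pow_i (s) (hs : s ∈ A i) : t ^ s = 1 := by
      have := h.1 ⟨s, hs⟩
      rw [eval_finsetSum] at this
      simp only [eval_pow, eval_X] at this
      rw [← sub_eq_zero, ← mul_geom_sum, this, mul_zero]
    have pow_j (s) (hs : s ∈ A j) : t ^ s = 1 := by
      simpa [powSubOne, sub_eq_zero] using h.2 ⟨s, hs⟩
    exact eval_geom_ne_zero (hA t pow_i pow_j ▸ h.1 ⟨n, hn⟩)
  have coprime := eventually_isCoprime_sum_smul (κ := fun i ↦ {s // s ∈ A i}) hij
    ⟨_, fun h ↦ eval_geom_ne_zero (by rw [h, eval_zero])⟩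
    ⟨⟨m, hm⟩, X_pow_sub_C_ne_zero (Nat.pos_of_ne_zero hm0) 1⟩ no_common_root
  filter_upwards [coprime] with c hc
  refine parameterField_eq_top_of_isCoprime (i := i) (a := 1) ?_
    ((parameterization_sub_C_eval_one c).symm ▸ hc)
  rw [parameterization_sub_C_eval_one, Finset.mul_sum]
  exact Finset.sum_congr rfl fun s _ ↦ by rw [mul_smul_comm, C_1, mul_geom_sum]

end Parameterization

/-- Polynomial parameterizations, case with a constant term: the implicit Newton polygon
is the triangle with vertices `(0,0)`, `(m',0)`, `(0,n')`. -/
theorem implicit_polygon_poly_triangle (A : Fin 2 → Finset ℕ) (hne : ∀ i, (A i).Nonempty)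
    (n' m' : ℕ) (hn' : n' = (A 0).max' (hne 0)) (hm' : m' = (A 1).max' (hne 1))
    (hn'1 : 1 ≤ n') (hm'1 : 1 ≤ m')
    (hgcd : ((A 0 ∪ A 1).filter (fun s => s ≠ 0)).gcd id = 1)
    (hconst : 0 ∈ A 0 ∨ 0 ∈ A 1) :
    ∃ G : MvPolynomial (Σ i : Fin 2, {s // s ∈ A i}) ℂ, G ≠ 0 ∧
      ∀ c : (Σ i : Fin 2, {s // s ∈ A i}) → ℂ, MvPolynomial.eval c G ≠ 0 →
        ∀ φ : MvPolynomial (Fin 2) ℂ, Irreducible φ → vanishesPoly A c φ →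
          newtonPolygon φ =
            convexHull ℝ {((0 : ℝ), (0 : ℝ)), ((m' : ℝ), (0 : ℝ)), ((0 : ℝ), (n' : ℝ))} := by
  have hn'0 : ∃ s ∈ A 0, s ≠ 0 := ⟨_, (A 0).max'_mem (hne 0), by omega⟩
  have hm'0 : ∃ s ∈ A 1, s ≠ 0 := ⟨_, (A 1).max'_mem (hne 1), by omega⟩
  have pow_eq_one (t : ℂ) (h0 : ∀ s ∈ A 0, t ^ s = 1) (h1 : ∀ s ∈ A 1, t ^ s = 1) : t = 1 :=
    pow_eq_one_of_gcd hgcd fun s hs ↦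
      (Finset.mem_union.1 (Finset.mem_filter.1 hs).1).elim (h0 s) (h1 s)
  refine eventually_generic.1 ?_
  filter_upwards [eventually_natDegree_parameterization (hne 0),
    eventually_natDegree_parameterization (hne 1),
    eventually_isCoprime_parameterization zero_ne_one (hne 0) (hne 1) hconst,
    eventually_parameterField_eq_top zero_ne_one hn'0 hm'0 pow_eq_one]
    with c hdeg0 hdeg1 hcop htop φ hφ hvanish
  rw [← hn'] at hdeg0
  rw [← hm'] at hdeg1
  have hpos : ∀ i, (parameterization A c i).natDegree ≠ 0 := Fin.forall_fin_two.2 (by omega)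
  rw [newtonPolygon_eq_triangle_of_isCoprime hpos hcop htop hφ (vanishesPoly_iff.1 hvanish),
    hdeg0, hdeg1]
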